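/- Let B ∈ F₂[x] be an even polynomial with gcd(B², σ(B²)) = 1, and let P₁, P₂, P₃ be three pairwise distinct odd irreducible polynomials in F₂[x] none of which divides B. If A := B²·P₁·P₂·P₃ satisfies σ(A) = A, then A ∈ {x⁴(x+1)⁶(x³+x+1)(x³+x²+1)(x⁴+x³+x²+x+1), x⁶(x+1)⁴(x³+x+1)(x³+x²+1)(x⁴+x³+1)}. -/

import Mathlib

/-!
Since `B²` and `σ(B²)` are coprime, `σ(A) = A` says that `σ(B²) T = P₁ P₂ P₃` and
`B² T = (1 + P₁) (1 + P₂) (1 + P₃)` for some `T`. As the `Pᵢ` are odd, both `x` and `x + 1` divide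
the right-hand side of the second equation but not `T`, so `B = x ^ h (x + 1) ^ k C` with
`h, k ≥ 1`. Hence `σ(x ^ (2 h))` and `σ((x + 1) ^ (2 k))` are nontrivial factors of a product of
three primes, and there are two possibilities.

* Each of them is one of the primes (`no_third_prime`). By
  `(R + 1) (1 + σ(R ^ (2 n))) = R (R ^ n + 1)²` (`geom_add_one`), the second equation becomes
  `Q N² = (Q + 1) M²`, where `Q` is either the third prime or a prime divisor of `C`. The `Q`-adic
  valuations of the two sides have different parities (`mul_sq_ne`).
* One of them is a product of two of the primes, the other is the third prime, and `T = C = 1`.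
  Say `σ(x ^ (2 h)) = p q` (`core`); the other case follows by `x ↦ x + 1` (`core_swap`). Then
  `p`, `q`, `r` are Mersenne polynomials `1 + x ^ a (x + 1) ^ b`, and the low coefficients of
  `p q = 1 + x + ⋯ + x ^ (2 h)` at `0` and at `1` leave only `h = 3`, `k = 2` (`core_ordered`).
-/

open Polynomial

/-- The sum of all divisors of a polynomial over `F₂` (junk value `0` when the
divisor set is infinite, i.e. for `A = 0`). -/
noncomputable def sigma (A : Polynomial (ZMod 2)) : Polynomial (ZMod 2) :=
  ∑ᶠ (D : Polynomial (ZMod 2)) (_ : D ∣ A), D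

/-- A binary polynomial is odd if it evaluates to `1` at both `0` and `1`. -/
def IsOdd (B : Polynomial (ZMod 2)) : Prop := B.eval 0 = 1 ∧ B.eval 1 = 1

/-- A binary polynomial is even if it is not odd. -/
def IsEven (B : Polynomial (ZMod 2)) : Prop := ¬ IsOdd B

/-! ### The divisor sum on prime powers and coprime products -/

instance subsingleton_units_F2X : Subsingleton (ZMod 2)[X]ˣ := by
  refine ⟨fun u v => Units.ext ?_⟩
  have key : ∀ w : (ZMod 2)[X]ˣ, (w : (ZMod 2)[X]) = 1 := by
    intro w
    obtain ⟨r, hr, hw⟩ := Polynomial.isUnit_iff.1 w.isUnit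
    have : ∀ r : ZMod 2, r ≠ 0 → r = 1 := by decide
    rw [← hw, this r hr.ne_zero, C_1]
  rw [key u, key v]

lemma two_eq_zero_F2X : (2 : (ZMod 2)[X]) = 0 := CharTwo.two_eq_zero

lemma finite_divisors {A : (ZMod 2)[X]} (hA : A ≠ 0) : {D | D ∣ A}.Finite := by
  have : Fintype (ZMod 2)[X]ˣ := Fintype.ofSubsingleton 1
  have := UniqueFactorizationMonoid.fintypeSubtypeDvd A hA
  refine (Set.finite_range (Subtype.val : {D // D ∣ A} → (ZMod 2)[X])).subset ?_
  exact fun D hD => ⟨⟨D, hD⟩, rfl⟩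

lemma sigma_eq_sum {A : (ZMod 2)[X]} (hA : A ≠ 0) :
    sigma A = ∑ D ∈ (finite_divisors hA).toFinset, D :=
  finsum_mem_eq_finite_toFinset_sum (fun D => D) (finite_divisors hA)

/-- The factorization of a divisor of `U V` as (divisor of `U`) times (divisor of `V`) is unique;
no unit ambiguity remains because `1` is the only unit. -/
lemma eq_of_coprime_mul_eq {U V D D' E E' : (ZMod 2)[X]} (h : IsCoprime U V)
    (hD : D ∣ U) (hD' : D' ∣ U) (hE : E ∣ V) (hE' : E' ∣ V) (he : D * E = D' * E') :
    D = D' := by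
  apply associated_iff_eq.1
  apply associated_of_dvd_dvd
  · exact ((h.of_isCoprime_of_dvd_left hD).of_isCoprime_of_dvd_right hE').dvd_of_dvd_mul_right
      (he ▸ dvd_mul_right D E)
  · exact ((h.of_isCoprime_of_dvd_left hD').of_isCoprime_of_dvd_right hE).dvd_of_dvd_mul_right
      (he ▸ dvd_mul_right D' E')

lemma sigma_mul {U V : (ZMod 2)[X]} (hU : U ≠ 0) (hV : V ≠ 0) (h : IsCoprime U V) :
    sigma (U * V) = sigma U * sigma V := by
  rw [sigma_eq_sum hU, sigma_eq_sum hV, sigma_eq_sum (mul_ne_zero hU hV), Finset.sum_mul_sum,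
    ← Finset.sum_product']
  symm
  refine Finset.sum_nbij (fun z => z.1 * z.2) ?_ ?_ ?_ (fun _ _ => rfl)
  · intro z hz
    simp only [Finset.mem_product, Set.Finite.mem_toFinset, Set.mem_ofPred_eq] at hz ⊢
    exact mul_dvd_mul hz.1 hz.2
  · rintro ⟨D, E⟩ hz ⟨D', E'⟩ hz' he
    simp only [Finset.coe_product, Set.mem_prod, Finset.mem_coe, Set.Finite.mem_toFinset,
      Set.mem_ofPred_eq] at hz hz' he
    ext1
    · exact eq_of_coprime_mul_eq h hz.1 hz'.1 hz.2 hz'.2 he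
    · exact eq_of_coprime_mul_eq h.symm hz.2 hz'.2 hz.1 hz'.1
        (by rw [mul_comm E, mul_comm E']; exact he)
  · intro F hF
    simp only [Finset.mem_coe, Set.Finite.mem_toFinset, Set.mem_ofPred_eq] at hF
    obtain ⟨D, E, hD, hE, rfl⟩ := exists_dvd_and_dvd_of_dvd_mul hF
    exact ⟨(D, E), by simp [hD, hE], rfl⟩

lemma sigma_prime_pow {Q : (ZMod 2)[X]} (hQ : Irreducible Q) (n : ℕ) :
    sigma (Q ^ n) = ∑ i ∈ Finset.range (n + 1), Q ^ i := by
  rw [sigma_eq_sum (pow_ne_zero n hQ.ne_zero)]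
  symm
  refine Finset.sum_nbij (fun i => Q ^ i) ?_ ?_ ?_ (fun _ _ => rfl)
  · intro i hi
    simp only [Set.Finite.mem_toFinset, Set.mem_ofPred_eq]
    exact pow_dvd_pow Q (Nat.lt_succ_iff.1 (Finset.mem_range.1 hi))
  · intro i _ j _ hij
    exact pow_injective_of_not_isUnit hQ.not_isUnit hQ.ne_zero hij
  · intro F hF
    simp only [Finset.mem_coe, Set.Finite.mem_toFinset, Set.mem_ofPred_eq] at hF
    obtain ⟨i, hi, hF⟩ := (dvd_prime_pow hQ.prime n).1 hF
    exact ⟨i, by simpa using Nat.lt_succ_iff.2 hi, (associated_iff_eq.1 hF).symm⟩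

lemma sigma_one : sigma 1 = 1 := by
  simpa using sigma_prime_pow (irreducible_X (R := ZMod 2)) 0

lemma sigma_prime {P : (ZMod 2)[X]} (hP : Irreducible P) : sigma P = 1 + P := by
  simpa [Finset.sum_range_succ] using sigma_prime_pow hP 1

/-- The geometric sum `1 + R + ⋯ + R ^ (2 n)`, which is the divisor sum of `R ^ (2 n)` when `R` is
irreducible. -/
noncomputable def geom (R : (ZMod 2)[X]) (n : ℕ) : (ZMod 2)[X] :=
  ∑ i ∈ Finset.range (2 * n + 1), R ^ i

/-- Up to squares, `1 + geom R n` is `R (R + 1)`. -/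
lemma geom_add_one (R : (ZMod 2)[X]) (n : ℕ) :
    (R + 1) * (1 + geom R n) = R * (R ^ n + 1) ^ 2 := by
  have h := mul_geom_sum R (2 * n + 1)
  change (R - 1) * geom R n = _ at h
  linear_combination h + (geom R n - R * R ^ n) * two_eq_zero_F2X

lemma irreducible_X_add_one : Irreducible (X + 1 : (ZMod 2)[X]) := by
  simpa using irreducible_of_degree_eq_one (degree_X_add_C (1 : ZMod 2))

lemma geom_not_isUnit {R : (ZMod 2)[X]} (hR : Irreducible R) {n : ℕ} (hn : n ≠ 0) :
    ¬ IsUnit (geom R n) := by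
  intro h
  have h1 := geom_add_one R n
  rw [isUnit_iff_eq_one.1 h, one_add_one_eq_two, two_eq_zero_F2X, mul_zero] at h1
  have h2 : R ^ n + 1 = 0 := by
    simpa [hR.ne_zero] using h1.symm
  apply hR.not_isUnit
  apply isUnit_of_dvd_one
  have : (1 : (ZMod 2)[X]) = R ^ n := by
    linear_combination h2 - R ^ n * two_eq_zero_F2X
  rw [this]
  exact dvd_pow_self R hn

/-- Splitting off the full power of a prime divisor `R` of `D`. -/
lemma exists_peel {R D : (ZMod 2)[X]} (hR : Irreducible R) (hD : D ≠ 0) (hRD : R ∣ D) :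
    ∃ (j : ℕ) (E : (ZMod 2)[X]), j ≠ 0 ∧ E ≠ 0 ∧ ¬ R ∣ E ∧ D = R ^ j * E ∧
      sigma (D ^ 2) = geom R j * sigma (E ^ 2) := by
  obtain ⟨E, hDE, hE⟩ :=
    (FiniteMultiplicity.of_not_isUnit hR.not_isUnit hD).exists_eq_pow_mul_and_not_dvd
  have hE0 : E ≠ 0 := by rintro rfl; exact hE (dvd_zero R)
  refine ⟨multiplicity R D, E, ?_, hE0, hE, hDE, ?_⟩
  · intro h0
    rw [h0, pow_zero, one_mul] at hDE
    exact hE (hDE ▸ hRD)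
  · generalize multiplicity R D = j at hDE
    have hc : IsCoprime (R ^ (2 * j)) (E ^ 2) :=
      ((hR.coprime_iff_not_dvd).2 hE).pow
    rw [hDE, mul_pow, ← pow_mul, mul_comm j 2,
      sigma_mul (pow_ne_zero _ hR.ne_zero) (pow_ne_zero _ hE0) hc, sigma_prime_pow hR]
    rfl

lemma sigma_sq_eq_one {D : (ZMod 2)[X]} (hD : D ≠ 0) (h : sigma (D ^ 2) = 1) : D = 1 := by
  by_contra hD1
  obtain ⟨R, hR, hRD⟩ := WfDvdMonoid.exists_irreducible_factor
    (fun hu => hD1 (isUnit_iff_eq_one.1 hu)) hD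
  obtain ⟨j, E, hj, -, -, -, hs⟩ := exists_peel hR hD hRD
  exact geom_not_isUnit hR hj (.of_mul_eq_one _ (hs.symm.trans h))

/-! ### Arithmetic obstructions -/

/-- `Q` and `Q + 1` do not agree up to squares when `Q` is irreducible: the `Q`-adic valuations of
the two sides have different parities. -/
lemma mul_sq_ne {Q N M : (ZMod 2)[X]} (hQ : Irreducible Q) (hM : M ≠ 0)
    (h : Q * N ^ 2 = (Q + 1) * M ^ 2) : False := by
  have hQ1 : ¬ Q ∣ Q + 1 := fun hd =>
    hQ.not_isUnit (isUnit_of_dvd_one ((dvd_add_right dvd_rfl).1 hd))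
  have hN : N ≠ 0 := by
    rintro rfl
    have h0 : (Q + 1) * M ^ 2 = 0 := by rw [← h]; ring
    rcases mul_eq_zero.1 h0 with h0 | h0
    · exact hQ1 (h0 ▸ dvd_zero Q)
    · exact hM (by simpa using h0)
  have he := congrArg (emultiplicity Q) h
  rw [emultiplicity_mul hQ.prime, emultiplicity_mul hQ.prime, emultiplicity_pow hQ.prime,
    emultiplicity_pow hQ.prime, emultiplicity_eq_zero.2 hQ1,
    (FiniteMultiplicity.of_not_isUnit hQ.not_isUnit hN).emultiplicity_eq_multiplicity,
    (FiniteMultiplicity.of_not_isUnit hQ.not_isUnit hM).emultiplicity_eq_multiplicity,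
    (FiniteMultiplicity.of_not_isUnit hQ.not_isUnit hQ.ne_zero).emultiplicity_self] at he
  norm_cast at he
  omega

/-- One irreducible factor of `U` is one of the three primes, called `p`; the other two are `q` and
`r`, in some order. -/
lemma exists_match {U V p₁ p₂ p₃ : (ZMod 2)[X]} (h₁ : Irreducible p₁) (h₂ : Irreducible p₂)
    (h₃ : Irreducible p₃) (hU : ¬ IsUnit U) (h : U * V = p₁ * p₂ * p₃) :
    ∃ p q r U', ({p, q, r} : Multiset (ZMod 2)[X]) = {p₁, p₂, p₃} ∧ U = p * U' ∧
      U' * V = q * r := by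
  have h0 : U * V ≠ 0 := h ▸ mul_ne_zero (mul_ne_zero h₁.ne_zero h₂.ne_zero) h₃.ne_zero
  obtain ⟨R, hR, W, rfl⟩ := WfDvdMonoid.exists_irreducible_factor hU (left_ne_zero_of_mul h0)
  have hd : R ∣ p₁ * p₂ * p₃ := h ▸ ⟨W * V, by ring⟩
  have hc : ∀ P, Irreducible P → R ∣ P → R = P := fun P hP hRP =>
    associated_iff_eq.1 (hR.associated_of_dvd hP hRP)
  rcases hR.prime.dvd_or_dvd hd with hd | hd
  · rcases hR.prime.dvd_or_dvd hd with hd | hd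
    · obtain rfl := hc _ h₁ hd
      exact ⟨R, p₂, p₃, W, rfl, rfl, mul_left_cancel₀ hR.ne_zero (by linear_combination h)⟩
    · obtain rfl := hc _ h₂ hd
      exact ⟨R, p₁, p₃, W, Multiset.cons_swap _ _ _, rfl,
        mul_left_cancel₀ hR.ne_zero (by linear_combination h)⟩
  · obtain rfl := hc _ h₃ hd
    refine ⟨R, p₁, p₂, W, ?_, rfl, mul_left_cancel₀ hR.ne_zero (by linear_combination h)⟩
    change R ::ₘ p₁ ::ₘ {p₂} = p₁ ::ₘ p₂ ::ₘ {R}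
    rw [Multiset.cons_swap]
    congr 1
    exact Multiset.pair_comm _ _

/-! ### Coefficients and binomial coefficients modulo two -/

lemma coeff_mersenne (a b n : ℕ) :
    (X ^ a * (X + 1) ^ b : (ZMod 2)[X]).coeff n =
      if a ≤ n then (b.choose (n - a) : ZMod 2) else 0 := by
  rw [coeff_X_pow_mul', coeff_X_add_one_pow]

lemma coeff_geom_X (h n : ℕ) :
    (geom X h : (ZMod 2)[X]).coeff n = if n < 2 * h + 1 then 1 else 0 := by
  simp [geom, coeff_X_pow]

/-- From `15 C(b,6) · 2 = C(b,4) (b - 4) (b - 5)` and `3 C(b,3) = C(b,2) (b - 2)`. -/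
lemma choose_mod_of_even {b : ℕ} (hb : b % 4 = 2) (h4 : b.choose 4 % 2 = 0) :
    b.choose 3 % 2 = 0 ∧ b.choose 6 % 2 = 0 := by
  obtain ⟨s, rfl⟩ : ∃ s, b = 4 * s + 2 := ⟨b / 4, by omega⟩
  have h3 := Nat.choose_succ_right_eq (4 * s + 2) 2
  have h5 := Nat.choose_succ_right_eq (4 * s + 2) 4
  have h6 := Nat.choose_succ_right_eq (4 * s + 2) 5
  norm_num at h3 h5 h6
  constructor
  · have : (4 * s + 2).choose 2 * (4 * s) = 2 * ((4 * s + 2).choose 2 * (2 * s)) := by ring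
    omega
  · obtain ⟨w, hw⟩ : ∃ w, (4 * s + 2).choose 4 = 2 * w :=
      ⟨_, (Nat.mul_div_cancel' (Nat.dvd_of_mod_eq_zero h4)).symm⟩
    rcases s with _ | s
    · decide
    have e1 : 4 * (s + 1) + 2 - 4 = 2 * (2 * s + 1) := by omega
    have e2 : 2 * w * (2 * (2 * s + 1)) = 4 * (w * (2 * s + 1)) := by ring
    rw [hw, e1, e2] at h5
    obtain ⟨v, hv⟩ : ∃ v, (4 * (s + 1) + 2).choose 5 = 4 * v :=
      ⟨(4 * (s + 1) + 2).choose 5 / 4, by omega⟩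
    rw [hv, mul_assoc] at h6
    omega

lemma choose_two_mul (m : ℕ) : m.choose 2 * 2 = m * (m - 1) := by
  have := Nat.choose_succ_right_eq m 1
  simpa using this

/-! ### The substitution `x ↦ x + 1` and geometric sums -/

lemma geom_comp (h : ℕ) : (geom X h : (ZMod 2)[X]).comp (X + 1) = geom (X + 1) h := by
  simp [geom, comp, eval₂_finsetSum]

lemma comp_comp_X_add_one (F : (ZMod 2)[X]) : (F.comp (X + 1)).comp (X + 1) = F := by
  have : (X + 1 + 1 : (ZMod 2)[X]) = X := by linear_combination two_eq_zero_F2X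
  rw [comp_assoc]
  simp [this]

lemma irreducible_comp {P : (ZMod 2)[X]} (hP : Irreducible P) :
    Irreducible (P.comp (X + 1)) := by
  have h := (MulEquiv.irreducible_iff (algEquivAevalXAddC (1 : ZMod 2))).2 hP
  simpa [comp, aeval_def] using h

lemma not_irreducible_one_add_sq (G : (ZMod 2)[X]) : ¬ Irreducible (1 + G ^ 2) := by
  have : 1 + G ^ 2 = (1 + G) ^ 2 := by linear_combination - G * two_eq_zero_F2X
  rw [this]
  exact not_irreducible_pow (by norm_num)

lemma X_mul_geom (h : ℕ) :
    (X * geom (X + 1) h : (ZMod 2)[X]) = (X + 1) ^ (2 * h + 1) + 1 := by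
  have h1 := mul_geom_sum (X + 1 : (ZMod 2)[X]) (2 * h + 1)
  rw [add_sub_cancel_right] at h1
  change X * geom (X + 1) h = _ at h1
  linear_combination h1 - two_eq_zero_F2X

/-! ### The case where `σ(x ^ (2 h))` is a product of two of the primes -/

/-- In the variable `x + 1`, the coefficient of degree `1` gives `f = 1`, and then the one of degree
`3`, which is `C(2 k - 1, 2)`, is odd only for even `k`. -/
lemma exponents_of_geom {e f k : ℕ} (hk : k ≠ 0) (hf : f ≠ 0) (hef : e + f = 2 * k)
    (h : (1 + X ^ e * (X + 1) ^ f : (ZMod 2)[X]) = geom (X + 1) k) :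
    f = 1 ∧ (k = 1 ∨ k % 2 = 0) := by
  have hX : (X + 1 + 1 : (ZMod 2)[X]) = X := by linear_combination two_eq_zero_F2X
  have h' : (1 + X ^ f * (X + 1) ^ e : (ZMod 2)[X]) = geom X k := by
    rw [← comp_comp_X_add_one (geom X k), geom_comp, ← h]
    simp [hX, mul_comm]
  have hc := fun n => congrArg (fun F => coeff F n) h'
  simp only [coeff_add, coeff_one, coeff_mersenne, coeff_geom_X] at hc
  have hf1 : f = 1 := by
    have h1 := hc 1
    by_contra hne
    rw [if_neg (by norm_num), if_neg (by omega), if_pos (by omega)] at h1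
    simp at h1
  refine ⟨hf1, ?_⟩
  by_contra! hne
  have h3 := hc 3
  rw [hf1, if_neg (by norm_num), if_pos (by omega), if_pos (by omega), zero_add,
    ZMod.natCast_eq_one_iff_odd, Nat.odd_iff] at h3
  have h2 := choose_two_mul e
  obtain ⟨t, rfl⟩ : ∃ t, k = 2 * t + 1 := ⟨k / 2, by omega⟩
  obtain rfl : e = 4 * t + 1 := by omega
  have : (4 * t + 1) * (4 * t + 1 - 1) = 4 * ((4 * t + 1) * t) := by
    rw [Nat.add_sub_cancel]; ring
  norm_num at h3
  omega

/-- The case `p = 1 + x (x + 1) ^ b` and `q = 1 + x ^ c (x + 1) ^ d` with `c ≥ 2`. Irreducibility of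
`q` and the coefficients of low degree of `p q`, at `0` and at `1`, force `c = 2`, `d = 1`, and
finally `b = 2`. -/
lemma core_ordered {b c d e f h k : ℕ} (hb : b ≠ 0) (hd : d ≠ 0) (hc2 : 2 ≤ c) (hf : f ≠ 0)
    (hirr : Irreducible (1 + X ^ c * (X + 1) ^ d : (ZMod 2)[X]))
    (hpq : ((1 + X ^ 1 * (X + 1) ^ b) * (1 + X ^ c * (X + 1) ^ d) : (ZMod 2)[X]) = geom X h)
    (hr : (1 + X ^ e * (X + 1) ^ f : (ZMod 2)[X]) = geom (X + 1) k)
    (hx : 1 + c + e = 2 * h) (hy : b + d + f = 2 * k) (hef : e + f = 2 * k) :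
    h = 3 ∧ k = 2 := by
  obtain ⟨rfl, hk⟩ := exponents_of_geom (by omega) hf hef hr
  -- The exponent `c = 2 (h - k)` is even, so for even `d` the prime `q` would be a square.
  have hdodd : d % 2 = 1 := by
    by_contra hne
    apply not_irreducible_one_add_sq (X ^ (c / 2) * (X + 1) ^ (d / 2))
    rw [mul_pow, ← pow_mul, ← pow_mul, Nat.div_mul_cancel (by omega), Nat.div_mul_cancel (by omega)]
    exact hirr
  have hexp : (1 + X ^ 1 * (X + 1) ^ b + X ^ c * (X + 1) ^ d + X ^ (c + 1) * (X + 1) ^ (b + d) :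
      (ZMod 2)[X]) = geom X h := by
    rw [← hpq]; ring
  have hc := fun n => congrArg (fun F => coeff F n) hexp
  simp only [coeff_add, coeff_one, coeff_mersenne, coeff_geom_X] at hc
  have hc' : c = 2 := by
    by_contra hne
    have h2 := hc 2
    rw [if_neg (by norm_num), if_pos (by omega), if_neg (by omega), if_neg (by omega),
      if_pos (by omega), zero_add, add_zero, add_zero, ZMod.natCast_eq_one_iff_odd, Nat.odd_iff]
      at h2
    norm_num at h2
    omega
  subst hc'
  have hkeven : k % 2 = 0 := by omega
  -- Since `k` is even, `h = k + 1` is odd; the coefficient of `x + 1` in `p q` is then `1`, which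
  -- is seen after the substitution `x ↦ x + 1` and multiplication by `x`.
  have hd1 : d = 1 := by
    by_contra hne
    have hX : (X + 1 + 1 : (ZMod 2)[X]) = X := by linear_combination two_eq_zero_F2X
    have h1 : (X + X ^ (b + 1) * (X + 1) ^ 1 + X ^ (d + 1) * (X + 1) ^ 2 +
        X ^ (b + d + 1) * (X + 1) ^ 3 : (ZMod 2)[X]) = (X + 1) ^ (2 * h + 1) + 1 := by
      rw [← X_mul_geom, ← geom_comp, ← hexp]
      simp only [add_comp, mul_comp, pow_comp, X_comp, one_comp, hX]
      ring
    have h2 := congrArg (fun F => coeff F 2) h1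
    simp only [coeff_add, coeff_mersenne, coeff_X, coeff_one, coeff_X_add_one_pow] at h2
    rw [if_neg (by norm_num), if_neg (by omega), if_neg (by omega), if_neg (by omega),
      if_neg (by norm_num), eq_comm] at h2
    simp only [add_zero, ZMod.natCast_eq_zero_iff_even, Nat.even_iff] at h2
    have h3 := choose_two_mul (2 * h + 1)
    obtain ⟨t, rfl⟩ : ∃ t, h = 2 * t + 1 := ⟨h / 2, by omega⟩
    have : (2 * (2 * t + 1) + 1) * (2 * (2 * t + 1) + 1 - 1) =
      4 * (4 * t * t + 5 * t) + 6 := by rw [Nat.add_sub_cancel]; ring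
    omega
  subst hd1
  have hb4 : b % 4 = 2 := by omega
  suffices b = 2 by omega
  by_contra hne
  -- For `b ≥ 6` the coefficients of `x ^ 5` and `x ^ 7` are incompatible.
  have h5 := hc 5
  have h7 := hc 7
  rw [if_neg (by norm_num), if_pos (by omega), if_pos (by omega), if_pos (by omega),
    if_pos (by omega)] at h5 h7
  norm_num [-Nat.cast_add] at h5 h7
  norm_cast at h5 h7
  have e5 := choose_two_mul (b + 1)
  have e7 : (b + 1).choose 4 = b.choose 3 + b.choose 4 := Nat.choose_succ_succ' b 3
  obtain ⟨s, rfl⟩ : ∃ s, b = 4 * s + 2 := ⟨b / 4, by omega⟩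
  have : (4 * s + 2 + 1) * (4 * s + 2 + 1 - 1) = 4 * (4 * s * s + 5 * s) + 6 := by
    rw [Nat.add_sub_cancel]; ring
  rw [ZMod.natCast_eq_one_iff_odd, Nat.odd_iff] at h5 h7
  have c3 : Nat.choose 1 3 = 0 := by decide
  have c5 : Nat.choose 1 5 = 0 := by decide
  have := choose_mod_of_even hb4 (by omega)
  omega

lemma exponents_eq {i j i' j' : ℕ}
    (h : (X ^ i * (X + 1) ^ j : (ZMod 2)[X]) = X ^ i' * (X + 1) ^ j') : i = i' ∧ j = j' := by
  have h1 : (X + 1 : (ZMod 2)[X]) ≠ 0 := irreducible_X_add_one.ne_zero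
  have hd := congrArg natDegree h
  have ht := congrArg natTrailingDegree h
  have hX : (X + 1 : (ZMod 2)[X]).natTrailingDegree = 0 :=
    natTrailingDegree_eq_zero.2 (Or.inr (by simp))
  have hdX : (X + 1 : (ZMod 2)[X]).natDegree = 1 := natDegree_X_add_C 1
  have hp : ∀ n, ((X + 1 : (ZMod 2)[X]) ^ n).natTrailingDegree = 0 := fun n =>
    natTrailingDegree_eq_zero.2 (Or.inr (by simp [coeff_zero_eq_eval_zero]))
  rw [natDegree_mul (pow_ne_zero _ X_ne_zero) (pow_ne_zero _ h1),
    natDegree_mul (pow_ne_zero _ X_ne_zero) (pow_ne_zero _ h1), natDegree_X_pow, natDegree_X_pow,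
    natDegree_pow, natDegree_pow, hdX] at hd
  rw [natTrailingDegree_mul (pow_ne_zero _ X_ne_zero) (pow_ne_zero _ h1),
    natTrailingDegree_mul (pow_ne_zero _ X_ne_zero) (pow_ne_zero _ h1), natTrailingDegree_X_pow,
    natTrailingDegree_X_pow, hp, hp] at ht
  omega

lemma natDegree_mersenne {a : ℕ} (ha : a ≠ 0) (b : ℕ) :
    (1 + X ^ a * (X + 1) ^ b : (ZMod 2)[X]).natDegree = a + b := by
  have h1 : (X + 1 : (ZMod 2)[X]) ≠ 0 := irreducible_X_add_one.ne_zero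
  have hdX : (X + 1 : (ZMod 2)[X]).natDegree = 1 := natDegree_X_add_C 1
  have hd : (X ^ a * (X + 1) ^ b : (ZMod 2)[X]).natDegree = a + b := by
    rw [natDegree_mul (pow_ne_zero _ X_ne_zero) (pow_ne_zero _ h1), natDegree_X_pow,
      natDegree_pow, hdX, mul_one]
  rw [natDegree_add_eq_right_of_natDegree_lt (by rw [hd, natDegree_one]; omega), hd]

lemma natDegree_geom {R : (ZMod 2)[X]} (hR : R.natDegree = 1) (hR1 : R + 1 ≠ 0) (n : ℕ) :
    (geom R n).natDegree = 2 * n := by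
  have h0 : R ≠ 0 := by rintro rfl; simp at hR
  have hm := mul_geom_sum R (2 * n + 1)
  change (R - 1) * geom R n = _ at hm
  have hdp : (R ^ (2 * n + 1)).natDegree = 2 * n + 1 := by rw [natDegree_pow, hR, mul_one]
  have hd : (R ^ (2 * n + 1) - 1).natDegree = 2 * n + 1 := by
    rw [natDegree_sub_eq_left_of_natDegree_lt (by rw [hdp, natDegree_one]; omega), hdp]
  have hd1 : (R - 1).natDegree = 1 := by
    rw [natDegree_sub_eq_left_of_natDegree_lt (by rw [hR, natDegree_one]; omega), hR]
  have hg : geom R n ≠ 0 := by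
    intro hg
    rw [← hm, hg, mul_zero, natDegree_zero] at hd
    omega
  have hs : R - 1 ≠ 0 := by
    intro hs
    rw [hs, natDegree_zero] at hd1
    omega
  rw [← hm, natDegree_mul hs hg, hd1] at hd
  omega

/-- An odd `p` with `1 + p` supported on `x` and `x + 1` is a Mersenne polynomial. -/
lemma exists_mersenne {p M : (ZMod 2)[X]} {m n : ℕ} (ho : IsOdd p)
    (h : X ^ m * (X + 1) ^ n = (1 + p) * M) :
    ∃ a b, a ≠ 0 ∧ b ≠ 0 ∧ p = 1 + X ^ a * (X + 1) ^ b := by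
  obtain ⟨u, v, hu, hv, he⟩ := exists_dvd_and_dvd_of_dvd_mul (Dvd.intro M h.symm)
  obtain ⟨a, -, ha⟩ := (dvd_prime_pow prime_X m).1 hu
  obtain ⟨b, -, hb⟩ := (dvd_prime_pow irreducible_X_add_one.prime n).1 hv
  rw [associated_iff_eq.1 ha, associated_iff_eq.1 hb] at he
  have h2 : (1 + 1 : ZMod 2) = 0 := by decide
  refine ⟨a, b, ?_, ?_, by linear_combination he - two_eq_zero_F2X⟩
  · rintro rfl
    have := congrArg (eval 0) he
    simp [ho.1, h2] at this
  · rintro rfl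
    have := congrArg (eval 1) he
    simp [ho.2, h2] at this

/-- The coefficient of `x` shows that exactly one of `p` and `q` has the form `1 + x (x + 1) ^ b`;
the degree and the factorization of `B²` supply the relations between the exponents. -/
lemma core {p q r : (ZMod 2)[X]} {h k : ℕ} (hp : Irreducible p) (hq : Irreducible q)
    (hpo : IsOdd p) (hqo : IsOdd q) (hro : IsOdd r) (hpq : geom X h = p * q)
    (hr : geom (X + 1) k = r)
    (hB : X ^ (2 * h) * (X + 1) ^ (2 * k) = (1 + p) * (1 + q) * (1 + r)) :
    h = 3 ∧ k = 2 := by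
  obtain ⟨a, b, ha, hb, rfl⟩ := exists_mersenne hpo (M := (1 + q) * (1 + r)) (by rw [hB]; ring)
  obtain ⟨c, d, hc, hd, rfl⟩ := exists_mersenne hqo
    (M := (1 + (1 + X ^ a * (X + 1) ^ b)) * (1 + r)) (by rw [hB]; ring)
  obtain ⟨e, f, he, hf, rfl⟩ := exists_mersenne hro
    (M := (1 + (1 + X ^ a * (X + 1) ^ b)) * (1 + (1 + X ^ c * (X + 1) ^ d)))
    (by rw [hB]; ring)
  have hB' : (X ^ (2 * h) * (X + 1) ^ (2 * k) : (ZMod 2)[X]) =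
      X ^ (a + c + e) * (X + 1) ^ (b + d + f) := by
    have hc (F : (ZMod 2)[X]) : 1 + (1 + F) = F := by linear_combination two_eq_zero_F2X
    rw [hB, hc, hc, hc]
    ring
  obtain ⟨hx, hy⟩ := exponents_eq hB'
  have hdr := congrArg natDegree hr
  rw [natDegree_mersenne he, natDegree_geom (R := X + 1) (natDegree_X_add_C 1)] at hdr
  swap
  · have hX : (X + 1 + 1 : (ZMod 2)[X]) = X := by linear_combination two_eq_zero_F2X
    rw [hX]
    exact X_ne_zero
  have h1 := congrArg (fun F => coeff F 1) (show (1 + X ^ a * (X + 1) ^ b + X ^ c * (X + 1) ^ d +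
    X ^ (a + c) * (X + 1) ^ (b + d) : (ZMod 2)[X]) = geom X h by rw [hpq]; ring)
  simp only [coeff_add, coeff_one, coeff_mersenne, coeff_geom_X] at h1
  rw [if_neg (by norm_num), if_neg (by omega : ¬ a + c ≤ 1), if_pos (by omega : 1 < 2 * h + 1),
    zero_add, add_zero] at h1
  by_cases ha1 : a = 1
  · subst ha1
    by_cases hc1 : c = 1
    · subst hc1
      revert h1
      simp
    · exact core_ordered hb hd (by omega) hf hq hpq.symm hr.symm hx.symm hy.symm hdr.symm
  · by_cases hc1 : c = 1
    · subst hc1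
      exact core_ordered hd hb (by omega) hf hp (by rw [hpq]; ring) hr.symm
        (by omega) (by omega) hdr.symm
    · rw [if_neg (by omega : ¬ a ≤ 1), if_neg (by omega : ¬ c ≤ 1)] at h1
      exact absurd h1 (by decide)

/-! ### Perfect polynomials -/

lemma isOdd_comp {p : (ZMod 2)[X]} (ho : IsOdd p) : IsOdd (p.comp (X + 1)) := by
  have h2 : (1 + 1 : ZMod 2) = 0 := by decide
  constructor
  · simpa using ho.2
  · simpa [h2] using ho.1

lemma geom_X_three : (geom X 3 : (ZMod 2)[X]) = (X ^ 3 + X + 1) * (X ^ 3 + X ^ 2 + 1) := by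
  simp only [geom, Finset.sum_range_succ, Finset.sum_range_zero]
  linear_combination (-X ^ 3) * two_eq_zero_F2X

lemma geom_X_add_one_three :
    (geom (X + 1) 3 : (ZMod 2)[X]) = (X ^ 3 + X + 1) * (X ^ 3 + X ^ 2 + 1) := by
  rw [← geom_comp, geom_X_three]
  simp only [mul_comp, add_comp, pow_comp, X_comp, one_comp]
  have h1 : ((X + 1) ^ 3 + (X + 1) + 1 : (ZMod 2)[X]) = X ^ 3 + X ^ 2 + 1 := by
    linear_combination (X ^ 2 + 2 * X + 1) * two_eq_zero_F2X
  have h2 : ((X + 1) ^ 3 + (X + 1) ^ 2 + 1 : (ZMod 2)[X]) = X ^ 3 + X + 1 := by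
    linear_combination (2 * X ^ 2 + 2 * X + 1) * two_eq_zero_F2X
  rw [h1, h2, mul_comm]

lemma geom_X_two : (geom X 2 : (ZMod 2)[X]) = X ^ 4 + X ^ 3 + X ^ 2 + X + 1 := by
  simp only [geom, Finset.sum_range_succ, Finset.sum_range_zero]
  ring

lemma geom_X_add_one_two : (geom (X + 1) 2 : (ZMod 2)[X]) = X ^ 4 + X ^ 3 + 1 := by
  rw [← geom_comp, geom_X_two]
  simp only [add_comp, pow_comp, X_comp, one_comp]
  linear_combination (2 * X ^ 3 + 5 * X ^ 2 + 5 * X + 2) * two_eq_zero_F2X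

lemma X_dvd_one_add {p : (ZMod 2)[X]} (ho : IsOdd p) : X ∣ 1 + p := by
  have h2 : (1 + 1 : ZMod 2) = 0 := by decide
  rw [X_dvd_iff, coeff_zero_eq_eval_zero, eval_add, ho.1, eval_one, h2]

lemma X_add_one_dvd_one_add {p : (ZMod 2)[X]} (ho : IsOdd p) : X + 1 ∣ 1 + p := by
  have h2 : (1 + 1 : ZMod 2) = 0 := by decide
  have hX : (X + 1 : (ZMod 2)[X]) = X - C 1 := by
    rw [C_1]; linear_combination two_eq_zero_F2X
  rw [hX, dvd_iff_isRoot, IsRoot.def, eval_add, ho.2, eval_one, h2]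

lemma not_X_dvd {p : (ZMod 2)[X]} (ho : IsOdd p) : ¬ X ∣ p := by
  intro h
  refine (irreducible_X (R := ZMod 2)).not_isUnit (isUnit_of_dvd_one ?_)
  exact (dvd_add_left h).1 (X_dvd_one_add ho)

lemma not_X_add_one_dvd {p : (ZMod 2)[X]} (ho : IsOdd p) : ¬ X + 1 ∣ p := by
  intro h
  refine irreducible_X_add_one.not_isUnit (isUnit_of_dvd_one ?_)
  exact (dvd_add_left h).1 (X_add_one_dvd_one_add ho)

/-- Applied with `R = x` and `R = x + 1`, which divide `1 + P` but not `P` for odd `P`. -/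
lemma dvd_of_mul_eq {R B T p q r : (ZMod 2)[X]} (hR : Irreducible R)
    (h : B ^ 2 * T = (1 + p) * (1 + q) * (1 + r)) (hT : T ∣ p * q * r) (hRp : R ∣ 1 + p)
    (hp : ¬ R ∣ p) (hq : ¬ R ∣ q) (hr : ¬ R ∣ r) : R ∣ B := by
  have hd : R ∣ B ^ 2 * T := by
    rw [h, mul_assoc]
    exact hRp.mul_right _
  rcases hR.prime.dvd_or_dvd hd with hd | hd
  · exact hR.prime.dvd_of_dvd_pow hd
  · rcases hR.prime.dvd_or_dvd (hd.trans hT) with h' | h'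
    · rcases hR.prime.dvd_or_dvd h' with h' | h' <;> contradiction
    · contradiction

/-- Two of the primes cannot be `σ(x ^ (2 h))` and `σ((x + 1) ^ (2 k))`: up to squares,
`geom_add_one` turns `hB` into an equation between `r` and `r + 1`, or between `Q` and `Q + 1` for
a prime divisor `Q` of `C`, which `mul_sq_ne` excludes. -/
lemma no_third_prime {h k : ℕ} {C T r : (ZMod 2)[X]} (hr : Irreducible r) (hC : C ≠ 0)
    (hT : T * sigma (C ^ 2) = r)
    (hB : (X ^ h * ((X + 1) ^ k * C)) ^ 2 * T =
      (1 + geom X h) * (1 + geom (X + 1) k) * (1 + r)) : False := by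
  have hX0 : (X : (ZMod 2)[X]) ≠ 0 := X_ne_zero
  have hX1 : (X + 1 : (ZMod 2)[X]) ≠ 0 := irreducible_X_add_one.ne_zero
  have hX : (X + 1 + 1 : (ZMod 2)[X]) = X := by linear_combination two_eq_zero_F2X
  have g1 := geom_add_one X h
  have g2 := geom_add_one (X + 1) k
  rw [hX] at g2
  set B : (ZMod 2)[X] := X ^ h * ((X + 1) ^ k * C) with hBdef
  have hB0 : B ≠ 0 := mul_ne_zero (pow_ne_zero _ hX0) (mul_ne_zero (pow_ne_zero _ hX1) hC)
  obtain ⟨M, hM⟩ : ∃ M : (ZMod 2)[X], M = (X ^ h + 1) * ((X + 1) ^ k + 1) := ⟨_, rfl⟩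
  have hBM : B ^ 2 * T = M ^ 2 * (1 + r) := by
    apply mul_left_cancel₀ (mul_ne_zero hX0 hX1)
    rw [hB, hM]
    linear_combination X * (1 + geom (X + 1) k) * (1 + r) * g1 +
      X * (X ^ h + 1) ^ 2 * (1 + r) * g2
  by_cases hC1 : C = 1
  -- Here the third prime `r` is `T`, and it plays the role of `Q` in `mul_sq_ne`.
  · rw [hC1, one_pow, sigma_one, mul_one] at hT
    subst hT
    refine mul_sq_ne hr (M := M) (N := B) ?_ (by linear_combination hBM)
    rintro rfl
    rw [zero_pow two_ne_zero, zero_mul] at hBM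
    exact mul_ne_zero (pow_ne_zero 2 hB0) hr.ne_zero hBM
  -- Here `r = σ(Q ^ (2 m))` and `T = 1`.
  · obtain ⟨Q, hQ, hQC⟩ := WfDvdMonoid.exists_irreducible_factor
      (fun hu => hC1 (isUnit_iff_eq_one.1 hu)) hC
    obtain ⟨m, E, hm, -, -, -, hs⟩ := exists_peel hQ hC hQC
    rw [hs] at hT
    have hTE : T * sigma (E ^ 2) = 1 := by
      rcases hr.isUnit_or_isUnit (show r = geom Q m * (T * sigma (E ^ 2)) by
        rw [← hT]; ring) with hu | hu
      · exact absurd hu (geom_not_isUnit hQ hm)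
      · exact isUnit_iff_eq_one.1 hu
    have hT1 : T = 1 := isUnit_iff_eq_one.1 (.of_mul_eq_one _ hTE)
    have hrg : r = geom Q m := by rw [← hT]; linear_combination geom Q m * hTE
    have g3 := geom_add_one Q m
    rw [← hrg] at g3
    refine mul_sq_ne hQ (M := B) (N := M * (Q ^ m + 1)) hB0 ?_
    rw [hT1, mul_one] at hBM
    linear_combination -M ^ 2 * g3 - (Q + 1) * hBM

/-- Equality of multisets encodes that `p, q, r` is a rearrangement of `p₁, p₂, p₃`. -/
lemma multiset_triple {p q r p₁ p₂ p₃ : (ZMod 2)[X]}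
    (h : ({p, q, r} : Multiset (ZMod 2)[X]) = {p₁, p₂, p₃}) :
    p * q * r = p₁ * p₂ * p₃ ∧
      (1 + p) * (1 + q) * (1 + r) = (1 + p₁) * (1 + p₂) * (1 + p₃) ∧
      ∀ F : (ZMod 2)[X] → Prop, F p₁ → F p₂ → F p₃ → F p ∧ F q ∧ F r := by
  refine ⟨?_, ?_, ?_⟩
  · simpa [mul_assoc] using congrArg Multiset.prod h
  · have := congrArg (fun s => (s.map fun x : (ZMod 2)[X] => 1 + x).prod) h
    simp only [Multiset.insert_eq_cons, Multiset.map_cons, Multiset.map_singleton,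
      Multiset.prod_cons, Multiset.prod_singleton] at this
    linear_combination this
  · intro F h₁ h₂ h₃
    have key : ∀ s ∈ ({p, q, r} : Multiset (ZMod 2)[X]), F s := by
      rw [h]
      simp [h₁, h₂, h₃]
    exact ⟨key p (by simp), key q (by simp), key r (by simp)⟩

/-- The analogue of `exists_match` for two primes. -/
lemma exists_match₂ {U V q r : (ZMod 2)[X]} (hq : Irreducible q) (hr : Irreducible r)
    (hU : ¬ IsUnit U) (h : U * V = q * r) :
    ∃ W, (U = q * W ∧ W * V = r) ∨ (U = r * W ∧ W * V = q) := by
  have h0 : U * V ≠ 0 := h ▸ mul_ne_zero hq.ne_zero hr.ne_zero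
  obtain ⟨R, hR, W, rfl⟩ := WfDvdMonoid.exists_irreducible_factor hU (left_ne_zero_of_mul h0)
  have hd : R ∣ q * r := Dvd.intro (W * V) (by rw [← h]; ring)
  refine ⟨W, ?_⟩
  rcases hR.prime.dvd_or_dvd hd with hd | hd
  · obtain rfl := associated_iff_eq.1 (hR.associated_of_dvd hq hd)
    exact Or.inl ⟨rfl, mul_left_cancel₀ hR.ne_zero (by linear_combination h)⟩
  · obtain rfl := associated_iff_eq.1 (hR.associated_of_dvd hr hd)
    exact Or.inr ⟨rfl, mul_left_cancel₀ hR.ne_zero (by linear_combination h)⟩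

/-- The case `σ((x + 1) ^ (2 k)) = q r`, obtained from the other by the substitution
`x ↦ x + 1`. -/
lemma core_swap {p q r : (ZMod 2)[X]} {h k : ℕ} (hq : Irreducible q) (hr : Irreducible r)
    (hpo : IsOdd p) (hqo : IsOdd q) (hro : IsOdd r) (hp : geom X h = p)
    (hqr : geom (X + 1) k = q * r)
    (hB : X ^ (2 * h) * (X + 1) ^ (2 * k) = (1 + p) * (1 + q) * (1 + r)) :
    h = 2 ∧ k = 3 := by
  have hX : (X + 1 + 1 : (ZMod 2)[X]) = X := by linear_combination two_eq_zero_F2X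
  refine (core (h := k) (k := h) (irreducible_comp hq) (irreducible_comp hr) (isOdd_comp hqo)
    (isOdd_comp hro) (isOdd_comp hpo) ?_ ?_ ?_).symm
  · rw [← comp_comp_X_add_one (geom X k), geom_comp, hqr, mul_comp]
  · rw [← geom_comp, hp]
  · have := congrArg (fun F => F.comp (X + 1)) hB
    simp only [mul_comp, add_comp, pow_comp, X_comp, one_comp, hX] at this
    linear_combination this

/-- The hypotheses `hT` and `hB` together amount to `σ(A) = A`: the cofactor `T` of `σ(B²)` in
`P₁ P₂ P₃` is also the cofactor of `B²` in `σ(P₁) σ(P₂) σ(P₃)`. -/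
lemma classify {B T P₁ P₂ P₃ : (ZMod 2)[X]} (hB0 : B ≠ 0)
    (h1 : Irreducible P₁) (h2 : Irreducible P₂) (h3 : Irreducible P₃)
    (o1 : IsOdd P₁) (o2 : IsOdd P₂) (o3 : IsOdd P₃)
    (hT : sigma (B ^ 2) * T = P₁ * P₂ * P₃)
    (hB : B ^ 2 * T = (1 + P₁) * (1 + P₂) * (1 + P₃)) :
    (B = X ^ 2 * (X + 1) ^ 3 ∧ P₁ * P₂ * P₃ = geom X 2 * geom (X + 1) 3) ∨
    (B = X ^ 3 * (X + 1) ^ 2 ∧ P₁ * P₂ * P₃ = geom X 3 * geom (X + 1) 2) := by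
  have hTd : T ∣ P₁ * P₂ * P₃ := Dvd.intro_left _ hT
  have hXB : X ∣ B := dvd_of_mul_eq irreducible_X hB hTd (X_dvd_one_add o1)
    (not_X_dvd o1) (not_X_dvd o2) (not_X_dvd o3)
  have hX1B : X + 1 ∣ B := dvd_of_mul_eq irreducible_X_add_one hB hTd (X_add_one_dvd_one_add o1)
    (not_X_add_one_dvd o1) (not_X_add_one_dvd o2) (not_X_add_one_dvd o3)
  obtain ⟨h, B', hh, hB'0, -, rfl, hs⟩ := exists_peel irreducible_X hB0 hXB
  have hX1B' : X + 1 ∣ B' := by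
    rcases irreducible_X_add_one.prime.dvd_or_dvd hX1B with hd | hd
    · exact absurd (irreducible_X_add_one.prime.dvd_of_dvd_pow hd) fun hd => by
        have := associated_iff_eq.1 (irreducible_X_add_one.associated_of_dvd irreducible_X hd)
        exact one_ne_zero (α := (ZMod 2)[X]) (by linear_combination this)
    · exact hd
  obtain ⟨k, C, hk, hC0, -, rfl, hs'⟩ := exists_peel irreducible_X_add_one hB'0 hX1B'
  rw [hs, hs'] at hT
  have hG1 := geom_not_isUnit irreducible_X hh
  have hG2 := geom_not_isUnit irreducible_X_add_one hk
  obtain ⟨p, q, r, U, hmul, hU, hUV⟩ := exists_match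
    (V := geom (X + 1) k * (T * sigma (C ^ 2))) h1 h2 h3 hG1 (by rw [← hT]; ring)
  obtain ⟨m1, m2, m3⟩ := multiset_triple hmul
  obtain ⟨hp, hq, hr⟩ := m3 Irreducible h1 h2 h3
  obtain ⟨op, oq, or⟩ := m3 IsOdd o1 o2 o3
  rw [← m1] at hT ⊢
  rw [← m2] at hB
  clear m1 m2 m3 hmul h1 h2 h3 o1 o2 o3 hTd hX1B hXB hs hs' hX1B'
  have hG2' : ∀ {W Y s : (ZMod 2)[X]}, Irreducible s → W * (geom (X + 1) k * Y) = s →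
      W = 1 ∧ Y = 1 := by
    intro W Y s hs he
    rcases hs.isUnit_or_isUnit (show s = geom (X + 1) k * (W * Y) by rw [← he]; ring) with hu | hu
    · exact absurd hu hG2
    · exact ⟨isUnit_iff_eq_one.1 (.of_mul_eq_one _ (isUnit_iff_eq_one.1 hu)),
        isUnit_iff_eq_one.1 (isUnit_of_mul_isUnit_right hu)⟩
  have hC1 : T * sigma (C ^ 2) = 1 → T = 1 ∧ C = 1 := by
    intro he
    have hT1 : T = 1 := isUnit_iff_eq_one.1 (.of_mul_eq_one _ he)
    rw [hT1, one_mul] at he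
    exact ⟨hT1, sigma_sq_eq_one hC0 he⟩
  -- `U = 1` means that `σ(x ^ (2 h)) = p` is prime.
  by_cases hU1 : IsUnit U
  · rw [isUnit_iff_eq_one.1 hU1, mul_one] at hU
    rw [isUnit_iff_eq_one.1 hU1, one_mul] at hUV
    have main : ∀ {q r W : (ZMod 2)[X]}, Irreducible q → Irreducible r → IsOdd q → IsOdd r →
        geom (X + 1) k = q * W → W * (T * sigma (C ^ 2)) = r →
        (X ^ h * ((X + 1) ^ k * C)) ^ 2 * T = (1 + p) * (1 + q) * (1 + r) →
        X ^ h * ((X + 1) ^ k * C) = X ^ 2 * (X + 1) ^ 3 ∧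
          p * q * r = geom X 2 * geom (X + 1) 3 := by
      intro q r W hq hr oq or hqW hWr hB
      rcases hr.isUnit_or_isUnit hWr.symm with hu | hu
      · rw [isUnit_iff_eq_one.1 hu, one_mul] at hWr
        rw [isUnit_iff_eq_one.1 hu, mul_one] at hqW
        rw [← hU, ← hqW] at hB
        exact (no_third_prime hr hC0 hWr hB).elim
      · have hu := isUnit_iff_eq_one.1 hu
        obtain ⟨rfl, rfl⟩ := hC1 hu
        rw [hu, mul_one] at hWr
        subst hWr
        obtain ⟨rfl, rfl⟩ := core_swap hq hr op oq or hU hqW (by rw [← hB]; ring)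
        exact ⟨by ring, by rw [hU, hqW, mul_assoc]⟩
    obtain ⟨W, ⟨hqW, hWr⟩ | ⟨hqW, hWr⟩⟩ := exists_match₂ hq hr hG2 hUV
    · exact Or.inl (main hq hr oq or hqW hWr hB)
    · refine Or.inl ?_
      rw [show p * q * r = p * r * q by ring]
      exact main hr hq or oq hqW hWr (by rw [hB]; ring)
  · have main : ∀ {q r W : (ZMod 2)[X]}, Irreducible q → Irreducible r → IsOdd q → IsOdd r →
        U = q * W → W * (geom (X + 1) k * (T * sigma (C ^ 2))) = r →
        (X ^ h * ((X + 1) ^ k * C)) ^ 2 * T = (1 + p) * (1 + q) * (1 + r) →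
        X ^ h * ((X + 1) ^ k * C) = X ^ 3 * (X + 1) ^ 2 ∧
          p * q * r = geom X 3 * geom (X + 1) 2 := by
      intro q r W hq hr oq or hqW hWr hB
      obtain ⟨rfl, hu⟩ := hG2' hr hWr
      obtain ⟨rfl, rfl⟩ := hC1 hu
      rw [hu, one_mul, mul_one] at hWr
      rw [hqW, mul_one] at hU
      obtain ⟨rfl, rfl⟩ := core hp hq op oq or hU hWr (by rw [← hB]; ring)
      exact ⟨by ring, by rw [hU, hWr]⟩
    obtain ⟨W, ⟨hqW, hWr⟩ | ⟨hqW, hWr⟩⟩ := exists_match₂ hq hr hU1 hUV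
    · exact Or.inr (main hq hr oq or hqW hWr hB)
    · refine Or.inr ?_
      rw [show p * q * r = p * r * q by ring]
      exact main hr hq or oq hqW hWr (by rw [hB]; ring)

/-- Case `r = 3` of the main theorem. -/
theorem statement3 (B : Polynomial (ZMod 2)) (hB : IsEven B)
    (hgcd : IsCoprime (B ^ 2) (sigma (B ^ 2)))
    (P₁ P₂ P₃ : Polynomial (ZMod 2))
    (h1 : Irreducible P₁) (h1o : IsOdd P₁) (h1d : ¬ P₁ ∣ B)
    (h2 : Irreducible P₂) (h2o : IsOdd P₂) (h2d : ¬ P₂ ∣ B)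
    (h3 : Irreducible P₃) (h3o : IsOdd P₃) (h3d : ¬ P₃ ∣ B)
    (h12 : P₁ ≠ P₂) (h13 : P₁ ≠ P₃) (h23 : P₂ ≠ P₃)
    (A : Polynomial (ZMod 2)) (hA : A = B ^ 2 * P₁ * P₂ * P₃)
    (hperf : sigma A = A) :
    A = X ^ 4 * (X + 1) ^ 6 * (X ^ 3 + X + 1) * (X ^ 3 + X ^ 2 + 1) *
          (X ^ 4 + X ^ 3 + X ^ 2 + X + 1) ∨
    A = X ^ 6 * (X + 1) ^ 4 * (X ^ 3 + X + 1) * (X ^ 3 + X ^ 2 + 1) *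
          (X ^ 4 + X ^ 3 + 1) := by
  have hB0 : B ≠ 0 := by rintro rfl; exact h1d (dvd_zero _)
  have hBsq : B ^ 2 ≠ 0 := pow_ne_zero 2 hB0
  have hcop : ∀ {P F : (ZMod 2)[X]}, Irreducible P → ¬ P ∣ F → IsCoprime F P :=
    fun hP hF => (hP.coprime_iff_not_dvd.2 hF).symm
  have hpp : ∀ {P Q : (ZMod 2)[X]}, Irreducible P → Irreducible Q → P ≠ Q → IsCoprime P Q :=
    fun hP hQ hne => hP.coprime_iff_not_dvd.2 fun hd =>
      hne (associated_iff_eq.1 (hP.associated_of_dvd hQ hd))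
  have c1 : IsCoprime (B ^ 2) P₁ := (hcop h1 h1d).pow_left
  have c2 : IsCoprime (B ^ 2 * P₁) P₂ := .mul_left (hcop h2 h2d).pow_left (hpp h1 h2 h12)
  have c3 : IsCoprime (B ^ 2 * P₁ * P₂) P₃ :=
    .mul_left (.mul_left (hcop h3 h3d).pow_left (hpp h1 h3 h13)) (hpp h2 h3 h23)
  have n1 := mul_ne_zero hBsq h1.ne_zero
  have hs : sigma A = sigma (B ^ 2) * (1 + P₁) * (1 + P₂) * (1 + P₃) := by
    rw [hA, sigma_mul (mul_ne_zero n1 h2.ne_zero) h3.ne_zero c3, sigma_mul n1 h2.ne_zero c2,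
      sigma_mul hBsq h1.ne_zero c1, sigma_prime h1, sigma_prime h2, sigma_prime h3]
  have heq : sigma (B ^ 2) * ((1 + P₁) * (1 + P₂) * (1 + P₃)) = B ^ 2 * (P₁ * P₂ * P₃) := by
    rw [hA] at hperf hs
    linear_combination hperf - hs
  obtain ⟨T, hT⟩ := hgcd.symm.dvd_of_dvd_mul_left (Dvd.intro _ heq)
  have hS0 : sigma (B ^ 2) ≠ 0 := by
    intro h0
    rw [h0, zero_mul] at hT
    exact mul_ne_zero (mul_ne_zero h1.ne_zero h2.ne_zero) h3.ne_zero hT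
  have hBT : B ^ 2 * T = (1 + P₁) * (1 + P₂) * (1 + P₃) := by
    apply mul_left_cancel₀ hS0
    rw [heq, hT]
    ring
  rcases classify hB0 h1 h2 h3 h1o h2o h3o hT.symm hBT with ⟨hb, hP⟩ | ⟨hb, hP⟩
  · left
    rw [geom_X_two, geom_X_add_one_three] at hP
    rw [hA, hb]
    linear_combination (X ^ 2 * (X + 1) ^ 3) ^ 2 * hP
  · right
    rw [geom_X_three, geom_X_add_one_two] at hP
    rw [hA, hb]
    linear_combination (X ^ 3 * (X + 1) ^ 2) ^ 2 * hP
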